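/- (Radford projection theorem over a field.) Let H and A be Hopf algebras over a field k and let π : H → A and ι : A → H be Hopf algebra homomorphisms with π ∘ ι = id_A. Let K := { r ∈ H : r_{(1)} ⊗ π(r_{(2)}) = r ⊗ 1 } be the space of coinvariants. Then: (1) K is a unital subalgebra of H; (2) the adjoint action a·r := ι(a_{(1)}) r ι(S_H(a_{(2)})) maps A ⊗ K into K, the map δ(r) := π(r_{(1)}) ⊗ r_{(2)} maps K into A ⊗ K, and these make K a left Yetter–Drinfel'd module over A; (3) Δ_K(r) := r_{(1)} ι(π(S_H(r_{(2)}))) ⊗ r_{(3)} maps K into K ⊗ K and makes K, together with ε_K = ε_H|_K and S_K(r) := ι(π(r_{(1)})) S_H(r_{(2)}), a Hopf algebra in the category of left A-Yetter–Drinfel'd modules; and (4) the linear map K ⊗ A → H, r ⊗ a ↦ r ι(a), is an isomorphism of Hopf algebras from the Radford biproduct K ⋊ A to H. -/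

import Mathlib

open TensorProduct

noncomputable section

variable {k : Type*} [Field k]
variable {A : Type*} [Ring A] [HopfAlgebra k A]
variable {X Y Z : Type*} [AddCommGroup X] [Module k X] [AddCommGroup Y] [Module k Y]
  [AddCommGroup Z] [Module k Z]

/-- LHS of the left Yetter–Drinfel'd compatibility condition, as a linear map
`A ⊗ X → A ⊗ X` sending `h ⊗ x` to `h₍₁₎x₍₋₁₎ ⊗ h₍₂₎ · x₍₀₎`. -/
def ydL (act : A ⊗[k] X →ₗ[k] X) (coact : X →ₗ[k] A ⊗[k] X) :
    A ⊗[k] X →ₗ[k] A ⊗[k] X :=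
  TensorProduct.map (LinearMap.mul' k A) act
    ∘ₗ (TensorProduct.tensorTensorTensorComm k A A A X).toLinearMap
    ∘ₗ TensorProduct.map (Coalgebra.comul (R := k)) coact

/-- RHS of the left Yetter–Drinfel'd compatibility condition, sending `h ⊗ x` to
`(h₍₁₎·x)₍₋₁₎ h₍₂₎ ⊗ (h₍₁₎·x)₍₀₎`. -/
def ydR (act : A ⊗[k] X →ₗ[k] X) (coact : X →ₗ[k] A ⊗[k] X) :
    A ⊗[k] X →ₗ[k] A ⊗[k] X :=
  TensorProduct.map (LinearMap.mul' k A) LinearMap.id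
    ∘ₗ (TensorProduct.assoc k A A X).symm.toLinearMap
    ∘ₗ LinearMap.lTensor A (TensorProduct.comm k X A).toLinearMap
    ∘ₗ (TensorProduct.assoc k A X A).toLinearMap
    ∘ₗ LinearMap.rTensor A coact
    ∘ₗ LinearMap.rTensor A act
    ∘ₗ (TensorProduct.assoc k A X A).symm.toLinearMap
    ∘ₗ LinearMap.lTensor A (TensorProduct.comm k A X).toLinearMap
    ∘ₗ (TensorProduct.assoc k A A X).toLinearMap
    ∘ₗ LinearMap.rTensor X (Coalgebra.comul (R := k))

/-- A left Yetter–Drinfel'd module structure over the Hopf algebra `A` on the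
vector space `X`: a left action, a left coaction, and the compatibility. -/
structure IsYD (act : A ⊗[k] X →ₗ[k] X) (coact : X →ₗ[k] A ⊗[k] X) : Prop where
  act_one : ∀ x : X, act (1 ⊗ₜ[k] x) = x
  act_mul : ∀ (a a' : A) (x : X),
    act ((a * a') ⊗ₜ[k] x) = act (a ⊗ₜ[k] act (a' ⊗ₜ[k] x))
  coassoc : (TensorProduct.assoc k A A X).toLinearMap
      ∘ₗ LinearMap.rTensor X (Coalgebra.comul (R := k)) ∘ₗ coact
      = LinearMap.lTensor A coact ∘ₗ coact
  counit_coact : (TensorProduct.lid k X).toLinearMap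
      ∘ₗ LinearMap.rTensor X (Coalgebra.counit (R := k)) ∘ₗ coact = LinearMap.id
  yd : ydL act coact = ydR act coact

/-- The diagonal action `h · (x ⊗ y) = h₍₁₎·x ⊗ h₍₂₎·y` on a tensor product. -/
def tAct (actX : A ⊗[k] X →ₗ[k] X) (actY : A ⊗[k] Y →ₗ[k] Y) :
    A ⊗[k] (X ⊗[k] Y) →ₗ[k] X ⊗[k] Y :=
  TensorProduct.map actX actY
    ∘ₗ (TensorProduct.tensorTensorTensorComm k A A X Y).toLinearMap
    ∘ₗ LinearMap.rTensor (X ⊗[k] Y) (Coalgebra.comul (R := k))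

/-- The codiagonal coaction `x ⊗ y ↦ x₍₋₁₎y₍₋₁₎ ⊗ (x₍₀₎ ⊗ y₍₀₎)` on a tensor product. -/
def tCoact (coactX : X →ₗ[k] A ⊗[k] X) (coactY : Y →ₗ[k] A ⊗[k] Y) :
    X ⊗[k] Y →ₗ[k] A ⊗[k] (X ⊗[k] Y) :=
  LinearMap.rTensor (X ⊗[k] Y) (LinearMap.mul' k A)
    ∘ₗ (TensorProduct.tensorTensorTensorComm k A X A Y).toLinearMap
    ∘ₗ TensorProduct.map coactX coactY

/-- The Yetter–Drinfel'd braiding `c_{X,Y} : x ⊗ y ↦ x₍₋₁₎ · y ⊗ x₍₀₎`. -/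
def ydBraid (coactX : X →ₗ[k] A ⊗[k] X) (actY : A ⊗[k] Y →ₗ[k] Y) :
    X ⊗[k] Y →ₗ[k] Y ⊗[k] X :=
  LinearMap.rTensor X actY
    ∘ₗ (TensorProduct.assoc k A Y X).symm.toLinearMap
    ∘ₗ LinearMap.lTensor A (TensorProduct.comm k X Y).toLinearMap
    ∘ₗ (TensorProduct.assoc k A X Y).toLinearMap
    ∘ₗ LinearMap.rTensor Y coactX

/-- The map `θ_X : x ↦ S(x₍₋₁₎) · x₍₀₎`. -/
def ydTheta (act : A ⊗[k] X →ₗ[k] X) (coact : X →ₗ[k] A ⊗[k] X) : X →ₗ[k] X :=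
  act ∘ₗ LinearMap.rTensor X (HopfAlgebra.antipode (R := k)) ∘ₗ coact

section Radford

variable {H : Type*} [Ring H] [HopfAlgebra k H]
variable {K : Type*} [AddCommGroup K] [Module k K]

/-- The generalized smash product multiplication on `K ⊗ A`, built from a
multiplication `mulK` on `K` and an `A`-action `actK` on `K`:
`(h⊗a)(k⊗b) = h (a₍₁₎·k) ⊗ a₍₂₎b`. -/
def biMulG (mulK : K ⊗[k] K →ₗ[k] K) (actK : A ⊗[k] K →ₗ[k] K) :
    (K ⊗[k] A) ⊗[k] (K ⊗[k] A) →ₗ[k] K ⊗[k] A :=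
  TensorProduct.map
      (mulK ∘ₗ LinearMap.lTensor K actK ∘ₗ (TensorProduct.assoc k K A K).toLinearMap)
      (LinearMap.mul' k A)
    ∘ₗ (TensorProduct.tensorTensorTensorComm k (K ⊗[k] A) A K A).toLinearMap
    ∘ₗ LinearMap.rTensor (K ⊗[k] A) (TensorProduct.assoc k K A A).symm.toLinearMap
    ∘ₗ LinearMap.rTensor (K ⊗[k] A) (LinearMap.lTensor K (Coalgebra.comul (R := k)))

/-- The cosmash comultiplication on `K ⊗ A`:
`Δ(h⊗a) = (h₍₁₎ ⊗ (h₍₂₎)₍₋₁₎a₍₁₎) ⊗ ((h₍₂₎)₍₀₎ ⊗ a₍₂₎)`. -/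
def biComulG (comulK : K →ₗ[k] K ⊗[k] K) (coactK : K →ₗ[k] A ⊗[k] K) :
    K ⊗[k] A →ₗ[k] (K ⊗[k] A) ⊗[k] (K ⊗[k] A) :=
  LinearMap.rTensor (K ⊗[k] A)
      (LinearMap.lTensor K (LinearMap.mul' k A) ∘ₗ (TensorProduct.assoc k K A A).toLinearMap)
    ∘ₗ (TensorProduct.tensorTensorTensorComm k (K ⊗[k] A) K A A).toLinearMap
    ∘ₗ LinearMap.rTensor (A ⊗[k] A) (TensorProduct.assoc k K A K).symm.toLinearMap
    ∘ₗ LinearMap.rTensor (A ⊗[k] A) (LinearMap.lTensor K coactK)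
    ∘ₗ TensorProduct.map comulK (Coalgebra.comul (R := k))

/-- The counit `ε_K ⊗ ε_A` on `K ⊗ A`. -/
def biCounitG (counitK : K →ₗ[k] k) : K ⊗[k] A →ₗ[k] k :=
  LinearMap.mul' k k ∘ₗ TensorProduct.map counitK (Coalgebra.counit (R := k))

/-- The space of coinvariants `K = {r ∈ H | r₍₁₎ ⊗ π(r₍₂₎) = r ⊗ 1}` of a Hopf
algebra projection `π : H → A`. -/
def coinvariants (π : H →ₐc[k] A) : Submodule k H :=
  LinearMap.ker
    (LinearMap.lTensor H π.toLinearMap ∘ₗ (Coalgebra.comul (R := k))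
      - (TensorProduct.mk k H A).flip 1)

/-- The adjoint action `a · r := ι(a₍₁₎) r ι(S_A(a₍₂₎))` of `A` on `H`. -/
def adAct (ι : A →ₐc[k] H) : A ⊗[k] H →ₗ[k] H :=
  LinearMap.mul' k H
    ∘ₗ LinearMap.lTensor H (LinearMap.mul' k H)
    ∘ₗ LinearMap.lTensor H (TensorProduct.comm k H H).toLinearMap
    ∘ₗ (TensorProduct.assoc k H H H).toLinearMap
    ∘ₗ LinearMap.rTensor H
        (TensorProduct.map ι.toLinearMap
          (ι.toLinearMap ∘ₗ HopfAlgebra.antipode (R := k)))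
    ∘ₗ LinearMap.rTensor H (Coalgebra.comul (R := k))

/-- The coaction `δ(r) := π(r₍₁₎) ⊗ r₍₂₎` of `A` on `H`. -/
def adCoact (π : H →ₐc[k] A) : H →ₗ[k] A ⊗[k] H :=
  LinearMap.rTensor H π.toLinearMap ∘ₗ (Coalgebra.comul (R := k))

/-- The comultiplication `Δ_K(r) := r₍₁₎ ι(π(S_H(r₍₂₎))) ⊗ r₍₃₎` of the coinvariants. -/
def coinvComul (π : H →ₐc[k] A) (ι : A →ₐc[k] H) : H →ₗ[k] H ⊗[k] H :=
  LinearMap.rTensor H (LinearMap.mul' k H)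
    ∘ₗ LinearMap.rTensor H
        (LinearMap.lTensor H
          (ι.toLinearMap ∘ₗ π.toLinearMap ∘ₗ HopfAlgebra.antipode (R := k)))
    ∘ₗ LinearMap.rTensor H (Coalgebra.comul (R := k))
    ∘ₗ (Coalgebra.comul (R := k))

/-- The antipode `S_K(r) := ι(π(r₍₁₎)) S_H(r₍₂₎)` of the coinvariants. -/
def coinvAntipode (π : H →ₐc[k] A) (ι : A →ₐc[k] H) : H →ₗ[k] H :=
  LinearMap.mul' k H
    ∘ₗ TensorProduct.map (ι.toLinearMap ∘ₗ π.toLinearMap) (HopfAlgebra.antipode (R := k))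
    ∘ₗ (Coalgebra.comul (R := k))

/-!
The map `P(h) = h₍₁₎ ι(π(S(h₍₂₎)))` is a projection of `H` onto `K` with `P(h ι(a)) = ε(a) P(h)`.
Since `h = P(h₍₁₎) ι(π(h₍₂₎))`, any linear map `F` on `H` with `F(h ι(a)) = ε(a) F(h)` satisfies
`F ∘ P = F`, and `r ⊗ a ↦ r ι(a)` is inverted by `h ↦ P(h₍₁₎) ⊗ π(h₍₂₎)`. The structure maps of `K`
are obtained from those of `H` by composing with `P`: `a · r = P(ι(a) r)` and
`Δ_K(r) = P(r₍₁₎) ⊗ P(r₍₂₎)`. By `F ∘ P = F` the inner occurrences of `P` can then be removed from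
each identity for `K`, which becomes coassociativity, multiplicativity of `Δ` or the antipode
identity in `H`.
-/

section Sweedler

variable {R C D E B M N P : Type*} [CommSemiring R]
  [AddCommMonoid C] [Module R C] [AddCommMonoid D] [Module R D]
  [Semiring E] [Semiring B] [Algebra R B]
  [AddCommMonoid M] [Module R M] [AddCommMonoid N] [Module R N] [AddCommMonoid P] [Module R P]

open Coalgebra HopfAlgebra

attribute [fun_prop] IsLinearMap

/-- The Sweedler sum `f(c₍₁₎, c₍₂₎)`, computed from an arbitrary representation of `Δ(c)`; it does
not depend on that choice when `f` is bilinear. -/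
def sweedler (R : Type*) {C M : Type*} [CommSemiring R] [AddCommMonoid C] [Module R C]
    [Coalgebra R C] [AddCommMonoid M] (c : C) (f : C → C → M) : M :=
  ∑ i ∈ (ℛ R c).index, f ((ℛ R c).left i) ((ℛ R c).right i)

@[fun_prop]
theorem isLinearMap_id : IsLinearMap R fun x : M => x := LinearMap.id.isLinear

@[fun_prop]
theorem isLinearMap_comp {f : N → P} {g : M → N} (hf : IsLinearMap R f) (hg : IsLinearMap R g) :
    IsLinearMap R fun x => f (g x) :=
  ((hf.mk' f).comp (hg.mk' g)).isLinear

@[fun_prop]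
theorem isLinearMap_coe {F : Type*} [FunLike F M N] [LinearMapClass F R M N] (φ : F) :
    IsLinearMap R fun x => φ x :=
  ⟨map_add φ, map_smul φ⟩

@[fun_prop]
theorem isLinearMap_smul_const {f : M → R} (hf : IsLinearMap R f) (n : N) :
    IsLinearMap R fun x => f x • n :=
  ((hf.mk' f).smulRight n).isLinear

@[fun_prop]
theorem isLinearMap_const_smul {f : M → N} (hf : IsLinearMap R f) (t : R) :
    IsLinearMap R fun x => t • f x :=
  (t • hf.mk' f).isLinear

@[fun_prop]
theorem isLinearMap_mul_const {f : M → B} (hf : IsLinearMap R f) (b : B) :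
    IsLinearMap R fun x => f x * b :=
  (LinearMap.mulRight R b ∘ₗ hf.mk' f).isLinear

@[fun_prop]
theorem isLinearMap_const_mul {f : M → B} (hf : IsLinearMap R f) (b : B) :
    IsLinearMap R fun x => b * f x :=
  (LinearMap.mulLeft R b ∘ₗ hf.mk' f).isLinear

@[fun_prop]
theorem isLinearMap_tmul_const {f : M → N} (hf : IsLinearMap R f) (y : P) :
    IsLinearMap R fun x => f x ⊗ₜ[R] y :=
  ((TensorProduct.mk R N P).flip y ∘ₗ hf.mk' f).isLinear

@[fun_prop]
theorem isLinearMap_const_tmul {f : M → N} (hf : IsLinearMap R f) (y : P) :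
    IsLinearMap R fun x => y ⊗ₜ[R] f x :=
  (TensorProduct.mk R P N y ∘ₗ hf.mk' f).isLinear

@[fun_prop]
theorem isLinearMap_sweedler [Coalgebra R C] (c : C) {f : M → C → C → N}
    (hf : ∀ x y, IsLinearMap R fun m => f m x y) :
    IsLinearMap R fun m => sweedler R c (f m) where
  map_add m m' := by simp only [sweedler, (hf _ _).map_add, Finset.sum_add_distrib]
  map_smul t m := by simp only [sweedler, (hf _ _).map_smul, Finset.smul_sum]

section Distrib

variable [Coalgebra R C] [Coalgebra R D]

theorem map_sweedler {F : Type*} [FunLike F M N] [LinearMapClass F R M N] (φ : F) (c : C)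
    (f : C → C → M) : φ (sweedler R c f) = sweedler R c fun x y => φ (f x y) :=
  map_sum φ ..

theorem map_sweedler_of_isLinearMap {f : M → N} (hf : IsLinearMap R f) (c : C) (g : C → C → M) :
    f (sweedler R c g) = sweedler R c fun x y => f (g x y) :=
  map_sweedler (hf.mk' f) c g

theorem tmul_sweedler (m : M) (c : C) (f : C → C → N) :
    m ⊗ₜ[R] sweedler R c f = sweedler R c fun x y => m ⊗ₜ[R] f x y :=
  TensorProduct.tmul_sum ..

theorem sweedler_tmul (c : C) (f : C → C → M) (n : N) :
    sweedler R c f ⊗ₜ[R] n = sweedler R c fun x y => f x y ⊗ₜ[R] n :=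
  TensorProduct.sum_tmul ..

theorem mul_sweedler (b : E) (c : C) (f : C → C → E) :
    b * sweedler R c f = sweedler R c fun x y => b * f x y :=
  Finset.mul_sum ..

theorem sweedler_mul (c : C) (f : C → C → E) (b : E) :
    sweedler R c f * b = sweedler R c fun x y => f x y * b :=
  Finset.sum_mul ..

theorem sweedler_smul (c : C) (f : C → C → M) (t : R) :
    (sweedler R c fun x y => t • f x y) = t • sweedler R c f :=
  Finset.smul_sum.symm

theorem sweedler_comm {M : Type*} [AddCommMonoid M] (c : C) (d : D) (f : C → C → D → D → M) :
    (sweedler R c fun x y => sweedler R d fun z w => f x y z w)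
      = sweedler R d fun z w => sweedler R c fun x y => f x y z w :=
  Finset.sum_comm

end Distrib

section Coalgebra

variable [Coalgebra R C] [Coalgebra R D]

theorem comul_eq_sweedler (c : C) : comul (R := R) c = sweedler R c fun x y => x ⊗ₜ[R] y :=
  (ℛ R c).eq.symm

theorem sweedler_eq_lift_comul (c : C) (f : C → C → M)
    (h₁ : ∀ y, IsLinearMap R fun x => f x y) (h₂ : ∀ x, IsLinearMap R fun y => f x y) :
    sweedler R c f = TensorProduct.lift
      (LinearMap.mk₂ R f (fun _ _ _ => (h₁ _).map_add ..) (fun _ _ _ => (h₁ _).map_smul ..)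
        (fun _ => (h₂ _).map_add) fun _ _ => (h₂ _).map_smul _) (comul c) := by
  simp only [comul_eq_sweedler, map_sweedler, TensorProduct.lift.tmul, LinearMap.mk₂_apply]

@[fun_prop]
theorem isLinearMap_sweedler_left (f : C → C → M)
    (h₁ : ∀ y, IsLinearMap R fun x => f x y) (h₂ : ∀ x, IsLinearMap R fun y => f x y) :
    IsLinearMap R fun c => sweedler R c f := by
  simp only [sweedler_eq_lift_comul _ f h₁ h₂]
  exact (TensorProduct.lift _ ∘ₗ comul).isLinear

theorem sweedler_of_map {F : Type*} [FunLike F C D] [CoalgHomClass F R C D] (φ : F) (c : C)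
    (f : D → D → M) (h₁ : ∀ y, IsLinearMap R fun x => f x y)
    (h₂ : ∀ x, IsLinearMap R fun y => f x y) :
    sweedler R (φ c) f = sweedler R c fun x y => f (φ x) (φ y) := by
  rw [sweedler_eq_lift_comul (φ c) f h₁ h₂, ← CoalgHomClass.map_comp_comul_apply]
  simp only [comul_eq_sweedler, map_sweedler, TensorProduct.map_tmul, TensorProduct.lift.tmul,
    LinearMap.mk₂_apply, LinearMap.coe_coe]

theorem sweedler_coassoc (c : C) (f : C → C → C → M)
    (h₁ : ∀ y z, IsLinearMap R fun x => f x y z := by fun_prop)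
    (h₂ : ∀ x z, IsLinearMap R fun y => f x y z := by fun_prop)
    (h₃ : ∀ x y, IsLinearMap R fun z => f x y z := by fun_prop) :
    (sweedler R c fun x z => sweedler R x fun x y => f x y z)
      = sweedler R c fun x y => sweedler R y fun y z => f x y z := by
  let g : C →ₗ[R] C ⊗[R] C →ₗ[R] M :=
    { toFun x := TensorProduct.lift <| LinearMap.mk₂ R (f x) (fun _ _ _ => (h₂ ..).map_add ..)
        (fun _ _ _ => (h₂ ..).map_smul ..) (fun _ => (h₃ ..).map_add)
        fun _ _ => (h₃ ..).map_smul _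
      map_add' _ _ := TensorProduct.ext' fun _ _ => (h₁ ..).map_add ..
      map_smul' _ _ := TensorProduct.ext' fun _ _ => (h₁ ..).map_smul .. }
  have h := congrArg (TensorProduct.lift g) (coassoc_apply (R := R) c)
  simp only [comul_eq_sweedler, map_sweedler, sweedler_tmul, tmul_sweedler, LinearMap.rTensor_tmul,
    LinearMap.lTensor_tmul, TensorProduct.assoc_tmul, TensorProduct.lift.tmul] at h
  exact h

theorem sweedler_counit_smul (c : C) {f : C → M} (hf : IsLinearMap R f) :
    (sweedler R c fun x y => counit (R := R) x • f y) = f c := by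
  simp only [← hf.map_smul]
  exact (map_sum (hf.mk' f) _ _).symm.trans (congrArg f (sum_counit_smul _))

theorem sweedler_smul_counit (c : C) {f : C → M} (hf : IsLinearMap R f) :
    (sweedler R c fun x y => counit (R := R) y • f x) = f c := by
  have h := congrArg (TensorProduct.rid R C) (sum_tmul_counit_eq (ℛ R c))
  simp only [map_sum, TensorProduct.rid_tmul, one_smul] at h
  simp only [← hf.map_smul]
  exact (map_sum (hf.mk' f) _ _).symm.trans (congrArg f h)

end Coalgebra

section Bialgebra

variable [Bialgebra R E]

theorem sweedler_of_one (f : E → E → M) (h₁ : ∀ y, IsLinearMap R fun x => f x y)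
    (h₂ : ∀ x, IsLinearMap R fun y => f x y) : sweedler R 1 f = f 1 1 := by
  rw [sweedler_eq_lift_comul 1 f h₁ h₂, Bialgebra.comul_one]
  rfl

theorem sweedler_of_mul (g h : E) (f : E → E → M) (h₁ : ∀ y, IsLinearMap R fun x => f x y)
    (h₂ : ∀ x, IsLinearMap R fun y => f x y) : sweedler R (g * h) f
      = sweedler R g fun x y => sweedler R h fun z w => f (x * z) (y * w) := by
  rw [sweedler_eq_lift_comul (g * h) f h₁ h₂, Bialgebra.comul_mul]
  simp only [comul_eq_sweedler, sweedler_comm g h, sweedler_mul, mul_sweedler, map_sweedler,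
    Algebra.TensorProduct.tmul_mul_tmul, TensorProduct.lift.tmul, LinearMap.mk₂_apply]

end Bialgebra

section HopfAlgebra

theorem sweedler_mul_antipode [HopfAlgebra R E] (h : E) :
    (sweedler R h fun x y => x * antipode R y) = counit (R := R) h • (1 : E) :=
  sum_mul_antipode_eq_smul (ℛ R h)

theorem sweedler_antipode_mul [HopfAlgebra R E] (h : E) :
    (sweedler R h fun x y => antipode R x * y) = counit (R := R) h • (1 : E) :=
  sum_antipode_mul_eq_smul (ℛ R h)

section AlgHom

variable [HopfAlgebra R E] (φ : E →ₐ[R] B) {F G : E → B}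

theorem sweedler_mul_map_antipode (hF : IsLinearMap R F)
    (hG : ∀ h, G h = sweedler R h fun x y => F x * φ y) (h : E) :
    (sweedler R h fun x y => G x * φ (antipode R y)) = F h := by
  simp only [hG, sweedler_mul, mul_assoc, ← map_mul]
  rw [sweedler_coassoc h fun x y z => F x * φ (y * antipode R z)]
  simp (disch := fun_prop) only [← mul_sweedler, ← map_sweedler, sweedler_mul_antipode, map_smul,
    map_one, mul_smul_comm, mul_one, sweedler_smul_counit]

theorem sweedler_map_antipode_mul (hF : IsLinearMap R F)
    (hG : ∀ h, G h = sweedler R h fun x y => F x * φ (antipode R y)) (h : E) :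
    (sweedler R h fun x y => G x * φ y) = F h := by
  simp only [hG, sweedler_mul, mul_assoc, ← map_mul]
  rw [sweedler_coassoc h fun x y z => F x * φ (antipode R y * z)]
  simp (disch := fun_prop) only [← mul_sweedler, ← map_sweedler, sweedler_antipode_mul, map_smul,
    map_one, mul_smul_comm, mul_one, sweedler_smul_counit]

end AlgHom

theorem map_antipode {B : Type*} [Semiring B] [HopfAlgebra R E] [HopfAlgebra R B] (φ : E →ₐc[R] B)
    (h : E) : φ (antipode R h) = antipode R (φ h) := by
  rw [← sweedler_mul_map_antipode (φ : E →ₐ[R] B) (F := fun x => antipode R (φ x))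
    (G := fun x => counit (R := R) x • 1) (by fun_prop) (fun x => ?_) h]
  · simp (disch := fun_prop) only [smul_mul_assoc, one_mul, sweedler_counit_smul]
    rfl
  · rw [← CoalgHomClass.counit_comp_apply φ x, ← sweedler_antipode_mul,
      sweedler_of_map _ _ _ (by fun_prop) (by fun_prop)]
    rfl

theorem sweedler_mul_map_of_comp_eq {F : Type*} [Semiring F] [HopfAlgebra R E] [HopfAlgebra R F]
    (φ ψ : E →ₐ[R] B) (ι : F →ₐc[R] E) (hι : ∀ a, φ (ι a) = ψ (ι a)) (h : E) (a : F) :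
    (sweedler R (h * ι a) fun x y => φ x * ψ (antipode R y))
      = counit (R := R) a • sweedler R h fun x y => φ x * ψ (antipode R y) := by
  rw [sweedler_of_mul _ _ _ (by fun_prop) (by fun_prop), ← sweedler_smul]
  congr! 3 with x y
  rw [sweedler_of_map ι _ _ (by fun_prop) (by fun_prop)]
  have regroup (b c : F) : φ (x * ι b) * ψ (antipode R (y * ι c))
      = φ x * (ψ (ι (b * antipode R c)) * ψ (antipode R y)) := by
    simp only [antipode_mul_antidistrib, map_mul, hι, map_antipode, mul_assoc]
  simp only [regroup, ← sweedler_mul, ← mul_sweedler, ← map_sweedler, sweedler_mul_antipode,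
    map_smul, map_one, mul_smul_comm, smul_mul_assoc, one_mul]

end HopfAlgebra

end Sweedler

theorem tAct_tmul_tmul (actX : A ⊗[k] X →ₗ[k] X) (actY : A ⊗[k] Y →ₗ[k] Y) (a : A) (x : X)
    (y : Y) : tAct actX actY (a ⊗ₜ[k] (x ⊗ₜ[k] y))
      = sweedler k a fun b c => actX (b ⊗ₜ[k] x) ⊗ₜ[k] actY (c ⊗ₜ[k] y) := by
  simp only [tAct, LinearMap.comp_apply, LinearMap.rTensor_tmul, comul_eq_sweedler, sweedler_tmul,
    map_sweedler, LinearEquiv.coe_coe, TensorProduct.tensorTensorTensorComm_tmul,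
    TensorProduct.map_tmul]

section Projection

open Coalgebra HopfAlgebra

variable {M : Type*} [AddCommMonoid M] [Module k M] {π : H →ₐc[k] A} {ι : A →ₐc[k] H}

/-- The right `A`-coaction `h ↦ h₍₁₎ ⊗ π(h₍₂₎)`, whose coinvariants are `coinvariants π`. -/
def rightCoact (π : H →ₐc[k] A) : H →ₐ[k] H ⊗[k] A :=
  (Algebra.TensorProduct.map (AlgHom.id k H) (π : H →ₐ[k] A)).comp (Bialgebra.comulAlgHom k H)

theorem rightCoact_apply (π : H →ₐc[k] A) (h : H) :
    rightCoact π h = sweedler k h fun x y => x ⊗ₜ[k] π y := by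
  simp only [rightCoact, AlgHom.comp_apply, Bialgebra.comulAlgHom_apply, comul_eq_sweedler,
    map_sweedler, Algebra.TensorProduct.map_tmul]
  rfl

theorem rightCoact_map (hπι : ∀ a, π (ι a) = a) (h : H) :
    rightCoact π (ι (π h)) = sweedler k h fun x y => ι (π x) ⊗ₜ[k] π y := by
  simp (disch := fun_prop) only [rightCoact_apply, sweedler_of_map, hπι]

theorem mem_coinvariants_iff {r : H} :
    r ∈ coinvariants π ↔ rightCoact π r = r ⊗ₜ[k] 1 := by
  rw [coinvariants, LinearMap.mem_ker, LinearMap.sub_apply, sub_eq_zero]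
  rfl

theorem one_mem_coinvariants (π : H →ₐc[k] A) : 1 ∈ coinvariants π :=
  mem_coinvariants_iff.2 (map_one _)

theorem mul_mem_coinvariants {r s : H} (hr : r ∈ coinvariants π)
    (hs : s ∈ coinvariants π) : r * s ∈ coinvariants π := by
  rw [mem_coinvariants_iff] at *
  rw [map_mul, hr, hs, Algebra.TensorProduct.tmul_mul_tmul, one_mul]

theorem sweedler_of_mem_coinvariants {r : H} (hr : r ∈ coinvariants π) (f : H → A → M)
    (h₁ : ∀ a, IsLinearMap k fun x => f x a := by fun_prop)
    (h₂ : ∀ x, IsLinearMap k fun a => f x a := by fun_prop) :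
    (sweedler k r fun x y => f x (π y)) = f r 1 := by
  rw [mem_coinvariants_iff, rightCoact_apply] at hr
  have h := congrArg (TensorProduct.lift (LinearMap.mk₂ k f (fun _ _ _ => (h₁ _).map_add ..)
    (fun _ _ _ => (h₁ _).map_smul ..) (fun _ => (h₂ _).map_add) fun _ _ => (h₂ _).map_smul _)) hr
  rwa [map_sweedler] at h

theorem map_of_mem_coinvariants {r : H} (hr : r ∈ coinvariants π) :
    π r = counit (R := k) r • (1 : A) := by
  rw [← sweedler_of_mem_coinvariants hr (fun x a => counit (R := k) x • a),
    sweedler_counit_smul _ (by fun_prop)]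

/-- The projection `P : h ↦ h₍₁₎ ι(π(S(h₍₂₎)))` of `H` onto the coinvariants of `π`. -/
def coinvProj (π : H →ₐc[k] A) (ι : A →ₐc[k] H) : H →ₗ[k] H :=
  LinearMap.mul' k H
    ∘ₗ LinearMap.lTensor H (ι.toLinearMap ∘ₗ π.toLinearMap ∘ₗ antipode k)
    ∘ₗ comul

theorem coinvProj_apply (π : H →ₐc[k] A) (ι : A →ₐc[k] H) (h : H) :
    coinvProj π ι h = sweedler k h fun x y => x * ι (π (antipode k y)) := by
  simp only [coinvProj, LinearMap.comp_apply, comul_eq_sweedler, map_sweedler]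
  rfl

theorem coinvAntipode_apply (π : H →ₐc[k] A) (ι : A →ₐc[k] H) (h : H) :
    coinvAntipode π ι h = sweedler k h fun x y => ι (π x) * antipode k y := by
  simp only [coinvAntipode, LinearMap.comp_apply, comul_eq_sweedler, map_sweedler]
  rfl

theorem adAct_tmul (ι : A →ₐc[k] H) (a : A) (h : H) :
    adAct ι (a ⊗ₜ[k] h) = sweedler k a fun x y => ι x * h * ι (antipode k y) := by
  simp only [adAct, LinearMap.comp_apply, LinearMap.rTensor_tmul, comul_eq_sweedler, sweedler_tmul,
    map_sweedler, mul_assoc]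
  rfl

theorem adCoact_apply (π : H →ₐc[k] A) (h : H) :
    adCoact π h = sweedler k h fun x y => π x ⊗ₜ[k] y := by
  simp only [adCoact, LinearMap.comp_apply, comul_eq_sweedler, map_sweedler]
  rfl

theorem coinvComul_apply (π : H →ₐc[k] A) (ι : A →ₐc[k] H) (h : H) :
    coinvComul π ι h = sweedler k h fun x y => coinvProj π ι x ⊗ₜ[k] y := by
  simp only [coinvComul, LinearMap.comp_apply, comul_eq_sweedler, map_sweedler,
    LinearMap.rTensor_tmul, sweedler_tmul, coinvProj]

theorem sweedler_coinvProj_mul (π : H →ₐc[k] A) (ι : A →ₐc[k] H) (h : H) :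
    (sweedler k h fun x y => coinvProj π ι x * ι (π y)) = h :=
  sweedler_map_antipode_mul ((ι : A →ₐ[k] H).comp (π : H →ₐ[k] A)) isLinearMap_id
    (coinvProj_apply π ι) h

theorem sweedler_coinvAntipode_mul (π : H →ₐc[k] A) (ι : A →ₐc[k] H) (h : H) :
    (sweedler k h fun x y => coinvAntipode π ι x * y) = ι (π h) :=
  sweedler_map_antipode_mul (F := fun x => ι (π x)) (AlgHom.id k H) (by fun_prop)
    (coinvAntipode_apply π ι) h

theorem coinvProj_of_mem_coinvariants {r : H} (hr : r ∈ coinvariants π) :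
    coinvProj π ι r = r := by
  simp only [coinvProj_apply, map_antipode]
  rw [sweedler_of_mem_coinvariants hr (fun x a => x * antipode k (ι a)), map_one,
    antipode_one, mul_one]

theorem sweedler_coinvProj_right {r : H} (hr : r ∈ coinvariants π) (f : H → H → M)
    (h₁ : ∀ y, IsLinearMap k fun x => f x y := by fun_prop)
    (h₂ : ∀ x, IsLinearMap k fun y => f x y := by fun_prop) :
    (sweedler k r fun x y => f x (coinvProj π ι y)) = sweedler k r f := by
  have map_f (x y : H) (g : H → H → H) :
      f x (sweedler k y g) = sweedler k y fun y z => f x (g y z) :=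
    map_sweedler_of_isLinearMap (h₂ x) y g
  simp only [coinvProj_apply, map_antipode, map_f]
  rw [← sweedler_coassoc _ fun x y z => f x (y * antipode k (ι (π z))),
    sweedler_of_mem_coinvariants hr fun x a => sweedler k x fun x y => f x (y * antipode k (ι a))]
  simp only [map_one, antipode_one, mul_one]

theorem sweedler_map_mul_of_mem_coinvariants (hπι : ∀ a, π (ι a) = a) (a : A) {r : H}
    (hr : r ∈ coinvariants π) (f : H → A → M)
    (h₁ : ∀ b, IsLinearMap k fun x => f x b := by fun_prop)
    (h₂ : ∀ x, IsLinearMap k fun b => f x b := by fun_prop) :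
    (sweedler k (ι a * r) fun x y => f x (π y)) = sweedler k a fun b c => f (ι b * r) c := by
  rw [sweedler_of_mul _ _ _ (by fun_prop) (by fun_prop),
    sweedler_of_map ι _ _ (by fun_prop) (by fun_prop)]
  simp only [map_mul, hπι]
  simp only [fun b c => sweedler_of_mem_coinvariants hr (fun x d => f (ι b * x) (c * d)), mul_one]

theorem coinvProj_map_mul (hπι : ∀ a, π (ι a) = a) (a : A) {r : H} (hr : r ∈ coinvariants π) :
    coinvProj π ι (ι a * r) = adAct ι (a ⊗ₜ[k] r) := by
  simp only [coinvProj_apply, map_antipode, adAct_tmul]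
  exact sweedler_map_mul_of_mem_coinvariants hπι a hr (fun x b => x * antipode k (ι b))

theorem sweedler_coinvProj_map_mul (hπι : ∀ a, π (ι a) = a) (a : A) {r : H}
    (hr : r ∈ coinvariants π) :
    (sweedler k a fun b c => coinvProj π ι (ι b * r) * ι c) = ι a * r := by
  rw [← sweedler_map_mul_of_mem_coinvariants hπι a hr fun x b => coinvProj π ι x * ι b,
    sweedler_coinvProj_mul]

theorem coinvProj_mul_map (hπι : ∀ a, π (ι a) = a) (h : H) (a : A) :
    coinvProj π ι (h * ι a) = counit (R := k) a • coinvProj π ι h := by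
  simp only [coinvProj_apply]
  exact sweedler_mul_map_of_comp_eq (AlgHom.id k H) ((ι : A →ₐ[k] H).comp (π : H →ₐ[k] A)) ι
    (fun a => (congrArg ι (hπι a)).symm) h a

theorem apply_coinvProj {F : H → M} (hF : IsLinearMap k F)
    (hFι : ∀ h a, F (h * ι a) = counit (R := k) a • F h) (h : H) : F (coinvProj π ι h) = F h := by
  rw [← congrArg F (sweedler_coinvProj_mul π ι h), map_sweedler_of_isLinearMap hF]
  simp (disch := fun_prop) only [hFι, CoalgHomClass.counit_comp_apply, sweedler_smul_counit]

theorem counit_coinvProj (h : H) :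
    counit (R := k) (coinvProj π ι h) = counit (R := k) h := by
  refine apply_coinvProj (by fun_prop) (fun h a => ?_) h
  rw [Bialgebra.counit_mul, CoalgHomClass.counit_comp_apply, mul_comm, smul_eq_mul]

theorem sweedler_mul_map_antipode_mem_coinvariants (ρ : H →ₗ[k] H) (χ : H →ₐ[k] H)
    (hρ : ∀ h, rightCoact π (ρ h) = sweedler k h fun x y => ρ x ⊗ₜ[k] π y)
    (hχ : ∀ h, rightCoact π (χ h) = sweedler k h fun x y => χ x ⊗ₜ[k] π y) (h : H) :
    (sweedler k h fun x y => ρ x * χ (antipode k y)) ∈ coinvariants π := by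
  let F (h : H) : H := sweedler k h fun x y => ρ x * χ (antipode k y)
  have sweedler_F (h : H) : (sweedler k h fun x y => F x * χ y) = ρ h :=
    sweedler_map_antipode_mul χ ρ.isLinear (fun _ => rfl) h
  have rightCoact_ρ (h : H) :
      rightCoact π (ρ h) = sweedler k h fun x y => F x ⊗ₜ[k] 1 * rightCoact π (χ y) := by
    simp only [hρ, hχ, mul_sweedler, Algebra.TensorProduct.tmul_mul_tmul, one_mul]
    rw [← sweedler_coassoc _ fun x y z => (F x * χ y) ⊗ₜ[k] π z]
    simp only [← sweedler_tmul, sweedler_F]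
  rw [mem_coinvariants_iff, map_sweedler]
  simp only [map_mul]
  exact sweedler_mul_map_antipode ((rightCoact π).comp χ) (F := fun x => F x ⊗ₜ[k] 1)
    (by fun_prop) rightCoact_ρ h

theorem coinvProj_mem_coinvariants (hπι : ∀ a, π (ι a) = a) (h : H) :
    coinvProj π ι h ∈ coinvariants π :=
  coinvProj_apply π ι h ▸ sweedler_mul_map_antipode_mem_coinvariants LinearMap.id
    ((ι : A →ₐ[k] H).comp (π : H →ₐ[k] A)) (rightCoact_apply π) (rightCoact_map hπι) h

theorem adAct_mem_coinvariants (hπι : ∀ a, π (ι a) = a) (a : A) {r : H}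
    (hr : r ∈ coinvariants π) : adAct ι (a ⊗ₜ[k] r) ∈ coinvariants π :=
  coinvProj_map_mul hπι a hr ▸ coinvProj_mem_coinvariants hπι _

theorem coinvAntipode_mem_coinvariants (hπι : ∀ a, π (ι a) = a) (h : H) :
    coinvAntipode π ι h ∈ coinvariants π :=
  coinvAntipode_apply π ι h ▸ sweedler_mul_map_antipode_mem_coinvariants
    (ι.toLinearMap ∘ₗ π.toLinearMap) (AlgHom.id k H) (rightCoact_map hπι) (rightCoact_apply π) h

theorem coinvAntipode_mul_map (hπι : ∀ a, π (ι a) = a) (h : H) (a : A) :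
    coinvAntipode π ι (h * ι a) = counit (R := k) a • coinvAntipode π ι h := by
  simp only [coinvAntipode_apply]
  exact sweedler_mul_map_of_comp_eq ((ι : A →ₐ[k] H).comp (π : H →ₐ[k] A)) (AlgHom.id k H) ι
    (fun a => congrArg ι (hπι a)) h a

theorem sweedler_coinvComul_adCoact {r : H} (hr : r ∈ coinvariants π) (f : H → H → M)
    (h₁ : ∀ y, IsLinearMap k fun x => f x y := by fun_prop)
    (h₂ : ∀ x, IsLinearMap k fun y => f x y := by fun_prop) :
    (sweedler k r fun x y => sweedler k (coinvProj π ι y) fun z w =>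
      f (coinvProj π ι x * ι (π z)) (coinvProj π ι w)) = sweedler k r f := by
  rw [sweedler_coinvProj_right hr (fun x y => sweedler k y fun z w =>
      f (coinvProj π ι x * ι (π z)) (coinvProj π ι w)),
    ← sweedler_coassoc _ (fun x y z => f (coinvProj π ι x * ι (π y)) (coinvProj π ι z))]
  have map_f (x y : H) (g : H → H → H) :
      (sweedler k x fun z w => f (g z w) y) = f (sweedler k x g) y :=
    (map_sweedler_of_isLinearMap (h₁ y) x g).symm
  simp only [map_f, sweedler_coinvProj_mul]
  exact sweedler_coinvProj_right hr f h₁ h₂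

theorem coinvProj_mul_coinvProj (hπι : ∀ a, π (ι a) = a) (g h : H) :
    coinvProj π ι (g * coinvProj π ι h) = coinvProj π ι (g * h) := by
  refine apply_coinvProj (F := fun h => coinvProj π ι (g * h)) (by fun_prop) (fun h a => ?_) h
  simp only [← mul_assoc, coinvProj_mul_map hπι]

theorem coinvAntipode_coinvProj (hπι : ∀ a, π (ι a) = a) (h : H) :
    coinvAntipode π ι (coinvProj π ι h) = coinvAntipode π ι h :=
  apply_coinvProj (by fun_prop) (coinvAntipode_mul_map hπι) h

/-- The projection `coinvProj` with codomain the coinvariants. -/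
def toCoinvariants (hπι : ∀ a, π (ι a) = a) : H →ₗ[k] coinvariants π :=
  (coinvProj π ι).codRestrict (coinvariants π) (coinvProj_mem_coinvariants hπι)

theorem coe_toCoinvariants (hπι : ∀ a, π (ι a) = a) (h : H) :
    (toCoinvariants hπι h : H) = coinvProj π ι h :=
  rfl

theorem toCoinvariants_coe (hπι : ∀ a, π (ι a) = a) (r : coinvariants π) :
    toCoinvariants hπι r = r :=
  Subtype.ext (coinvProj_of_mem_coinvariants r.2)

theorem toCoinvariants_mul_map (hπι : ∀ a, π (ι a) = a) (h : H) (a : A) :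
    toCoinvariants hπι (h * ι a) = counit (R := k) a • toCoinvariants hπι h :=
  Subtype.ext (coinvProj_mul_map hπι h a)

theorem toCoinvariants_mul_coinvProj (hπι : ∀ a, π (ι a) = a) (g h : H) :
    toCoinvariants hπι (g * coinvProj π ι h) = toCoinvariants hπι (g * h) :=
  Subtype.ext (coinvProj_mul_coinvProj hπι g h)

theorem sweedler_coinvProj (hπι : ∀ a, π (ι a) = a) (h : H)
    (f : coinvariants π → coinvariants π → M)
    (h₁ : ∀ y, IsLinearMap k fun x => f x y := by fun_prop)
    (h₂ : ∀ x, IsLinearMap k fun y => f x y := by fun_prop) :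
    (sweedler k (coinvProj π ι h) fun x y => f (toCoinvariants hπι x) (toCoinvariants hπι y))
      = sweedler k h fun x y => f (toCoinvariants hπι x) (toCoinvariants hπι y) := by
  refine apply_coinvProj (F := fun h => sweedler k h fun x y =>
    f (toCoinvariants hπι x) (toCoinvariants hπι y)) (by fun_prop) (fun h a => ?_) h
  simp (disch := fun_prop) only [sweedler_of_mul, sweedler_of_map, toCoinvariants_mul_map,
    (h₁ _).map_smul, (h₂ _).map_smul, sweedler_smul, sweedler_counit_smul]

theorem sweedler_adCoact_coinvProj (hπι : ∀ a, π (ι a) = a) (h : H) (f : A → coinvariants π → M)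
    (h₁ : ∀ y, IsLinearMap k fun x => f x y := by fun_prop)
    (h₂ : ∀ x, IsLinearMap k fun y => f x y := by fun_prop) :
    (sweedler k h fun x y => sweedler k (coinvProj π ι x) fun z w =>
      f (π z * π y) (toCoinvariants hπι w))
        = sweedler k h fun x y => f (π x) (toCoinvariants hπι y) := by
  have mul_map (h : H) (a : A) : (sweedler k (h * ι a) fun x y => f (π x) (toCoinvariants hπι y))
      = sweedler k h fun x y => f (π x * a) (toCoinvariants hπι y) := by
    simp (disch := fun_prop) only [sweedler_of_mul, sweedler_of_map, toCoinvariants_mul_map,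
      (h₂ _).map_smul, map_mul, hπι, sweedler_smul_counit]
  have map_h := map_sweedler_of_isLinearMap
    (f := fun h => sweedler k h fun x y => f (π x) (toCoinvariants hπι y)) (by fun_prop) h
    fun x y => coinvProj π ι x * ι (π y)
  simp only [sweedler_coinvProj_mul] at map_h
  rw [map_h]
  simp only [mul_map]

namespace coinvariants

variable (hπι : ∀ a, π (ι a) = a)

/-- The adjoint action of `A` on the coinvariants, in the form `a · r = P(ι(a)r)`. -/
def act : A ⊗[k] coinvariants π →ₗ[k] coinvariants π :=
  toCoinvariants hπι ∘ₗ LinearMap.mul' k H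
    ∘ₗ TensorProduct.map ι.toLinearMap (coinvariants π).subtype

/-- The coaction `r ↦ π(r₍₁₎) ⊗ r₍₂₎` on the coinvariants; projecting `r₍₂₎` to them changes
nothing. -/
def coact : coinvariants π →ₗ[k] A ⊗[k] coinvariants π :=
  TensorProduct.map π.toLinearMap (toCoinvariants hπι) ∘ₗ Coalgebra.comul
    ∘ₗ (coinvariants π).subtype

/-- The multiplication of the coinvariants. -/
def mul : coinvariants π ⊗[k] coinvariants π →ₗ[k] coinvariants π :=
  toCoinvariants hπι ∘ₗ LinearMap.mul' k H
    ∘ₗ TensorProduct.map (coinvariants π).subtype (coinvariants π).subtype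

/-- The unit of the coinvariants. -/
def one (π : H →ₐc[k] A) : coinvariants π :=
  ⟨1, one_mem_coinvariants π⟩

/-- The comultiplication `Δ_K` of the coinvariants, in the form `r ↦ P(r₍₁₎) ⊗ P(r₍₂₎)`. -/
def comul : coinvariants π →ₗ[k] coinvariants π ⊗[k] coinvariants π :=
  TensorProduct.map (toCoinvariants hπι) (toCoinvariants hπι) ∘ₗ Coalgebra.comul
    ∘ₗ (coinvariants π).subtype

/-- The counit of the coinvariants. -/
def counit (π : H →ₐc[k] A) : coinvariants π →ₗ[k] k :=
  Coalgebra.counit ∘ₗ (coinvariants π).subtype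

/-- The antipode `S_K` of the coinvariants. -/
def antipode : coinvariants π →ₗ[k] coinvariants π :=
  (coinvAntipode π ι ∘ₗ (coinvariants π).subtype).codRestrict (coinvariants π)
    fun r => coinvAntipode_mem_coinvariants hπι r

theorem act_tmul (a : A) (r : coinvariants π) :
    act hπι (a ⊗ₜ[k] r) = toCoinvariants hπι (ι a * r) :=
  rfl

theorem coact_apply (r : coinvariants π) :
    coact hπι r = sweedler k (r : H) fun x y => π x ⊗ₜ[k] toCoinvariants hπι y := by
  simp only [coact, LinearMap.comp_apply, comul_eq_sweedler, map_sweedler, Submodule.subtype_apply,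
    TensorProduct.map_tmul]
  rfl

theorem mul_tmul (r s : coinvariants π) :
    mul hπι (r ⊗ₜ[k] s) = toCoinvariants hπι (r * s : H) :=
  rfl

theorem comul_apply (r : coinvariants π) : comul hπι r
    = sweedler k (r : H) fun x y => toCoinvariants hπι x ⊗ₜ[k] toCoinvariants hπι y := by
  simp only [comul, LinearMap.comp_apply, comul_eq_sweedler, map_sweedler, Submodule.subtype_apply,
    TensorProduct.map_tmul]

theorem counit_apply (r : coinvariants π) : counit π r = Coalgebra.counit (R := k) (r : H) :=
  rfl

theorem coe_one (π : H →ₐc[k] A) : (one π : H) = 1 :=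
  rfl

theorem coe_mul_tmul (r s : coinvariants π) : (mul hπι (r ⊗ₜ[k] s) : H) = r * s :=
  coinvProj_of_mem_coinvariants (mul_mem_coinvariants r.2 s.2)

theorem coe_antipode (r : coinvariants π) : (antipode hπι r : H) = coinvAntipode π ι r :=
  rfl

theorem subtype_comp_act :
    (coinvariants π).subtype ∘ₗ act hπι = adAct ι ∘ₗ LinearMap.lTensor A (coinvariants π).subtype :=
  TensorProduct.ext' fun a r => coinvProj_map_mul hπι a r.2

theorem lTensor_subtype_comp_coact : LinearMap.lTensor A (coinvariants π).subtype ∘ₗ coact hπι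
    = adCoact π ∘ₗ (coinvariants π).subtype := by
  ext1 r
  simp only [LinearMap.comp_apply, coact_apply, map_sweedler, LinearMap.lTensor_tmul,
    Submodule.subtype_apply, coe_toCoinvariants, adCoact_apply]
  exact sweedler_coinvProj_right r.2 (fun x y => π x ⊗ₜ[k] y)

theorem subtype_comp_mul : (coinvariants π).subtype ∘ₗ mul hπι
    = LinearMap.mul' k H ∘ₗ TensorProduct.map (coinvariants π).subtype (coinvariants π).subtype :=
  TensorProduct.ext' (coe_mul_tmul hπι)

theorem map_subtype_comp_comul :
    TensorProduct.map (coinvariants π).subtype (coinvariants π).subtype ∘ₗ comul hπι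
      = coinvComul π ι ∘ₗ (coinvariants π).subtype := by
  ext1 r
  simp only [LinearMap.comp_apply, comul_apply, map_sweedler, TensorProduct.map_tmul,
    Submodule.subtype_apply, coe_toCoinvariants, coinvComul_apply]
  exact sweedler_coinvProj_right r.2 (fun x y => coinvProj π ι x ⊗ₜ[k] y)

theorem ydL_eq_ydR : ydL (act hπι) (coact hπι) = ydR (act hπι) (coact hπι) := by
  let p := toCoinvariants hπι
  have ydL_tmul (a : A) (r : coinvariants π) : ydL (act hπι) (coact hπι) (a ⊗ₜ[k] r)
      = sweedler k (r : H) fun x y => sweedler k a fun b c => (b * π x) ⊗ₜ[k] p (ι c * y) := by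
    simp only [ydL, LinearMap.comp_apply, TensorProduct.map_tmul, comul_eq_sweedler, coact_apply,
      sweedler_tmul, tmul_sweedler, map_sweedler, LinearEquiv.coe_coe, LinearMap.mul'_apply,
      TensorProduct.tensorTensorTensorComm_tmul, act_tmul, coe_toCoinvariants,
      toCoinvariants_mul_coinvProj, p]
  have ydR_tmul (a : A) (r : coinvariants π) : ydR (act hπι) (coact hπι) (a ⊗ₜ[k] r)
      = sweedler k a fun b c => sweedler k (coinvProj π ι (ι b * r)) fun x y =>
          (π x * c) ⊗ₜ[k] p y := by
    simp only [ydR, LinearMap.comp_apply, LinearMap.rTensor_tmul, LinearMap.lTensor_tmul,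
      comul_eq_sweedler, sweedler_tmul, map_sweedler, LinearEquiv.coe_coe, TensorProduct.assoc_tmul,
      TensorProduct.assoc_symm_tmul, TensorProduct.comm_tmul, act_tmul, coact_apply,
      coe_toCoinvariants, TensorProduct.map_tmul, LinearMap.mul'_apply, LinearMap.id_apply, p]
  refine TensorProduct.ext' fun a r => ?_
  calc
    _ = sweedler k (r : H) fun x y => sweedler k a fun b c => (b * π x) ⊗ₜ[k] p (ι c * y) :=
      ydL_tmul a r
    _ = sweedler k (ι a * r) fun x y => π x ⊗ₜ[k] p y := by
      rw [sweedler_comm]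
      simp (disch := fun_prop) only [sweedler_of_mul, sweedler_of_map, map_mul, hπι]
    _ = sweedler k (ι a * r) fun h c => sweedler k (coinvProj π ι h) fun x y =>
          (π x * π c) ⊗ₜ[k] p y :=
      (sweedler_adCoact_coinvProj hπι _ fun b s => b ⊗ₜ[k] s).symm
    _ = sweedler k a fun b c => sweedler k (coinvProj π ι (ι b * r)) fun x y =>
          (π x * c) ⊗ₜ[k] p y :=
      sweedler_map_mul_of_mem_coinvariants hπι a r.2 fun h c =>
        sweedler k (coinvProj π ι h) fun x y => (π x * c) ⊗ₜ[k] p y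
    _ = _ := (ydR_tmul a r).symm

theorem isYD : IsYD (act hπι) (coact hπι) where
  act_one r := by
    rw [act_tmul, map_one, one_mul, toCoinvariants_coe]
  act_mul a b r := by
    rw [act_tmul, act_tmul, act_tmul, coe_toCoinvariants, toCoinvariants_mul_coinvProj, map_mul ι,
      mul_assoc]
  coassoc := by
    ext1 r
    simp (disch := fun_prop) only [LinearMap.comp_apply, coact_apply, map_sweedler,
      LinearMap.rTensor_tmul, LinearMap.lTensor_tmul, comul_eq_sweedler, sweedler_tmul,
      LinearEquiv.coe_coe, TensorProduct.assoc_tmul, sweedler_of_map, coe_toCoinvariants,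
      tmul_sweedler]
    rw [sweedler_coinvProj_right r.2 fun x y => sweedler k y fun z w =>
        π x ⊗ₜ[k] (π z ⊗ₜ[k] toCoinvariants hπι w),
      ← sweedler_coassoc _ fun x y z => π x ⊗ₜ[k] (π y ⊗ₜ[k] toCoinvariants hπι z)]
  counit_coact := by
    ext1 r
    simp (disch := fun_prop) only [LinearMap.comp_apply, coact_apply, map_sweedler,
      LinearMap.rTensor_tmul, LinearEquiv.coe_coe, TensorProduct.lid_tmul,
      CoalgHomClass.counit_comp_apply, sweedler_counit_smul, toCoinvariants_coe,
      LinearMap.id_apply]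
  yd := ydL_eq_ydR hπι

theorem mul_toCoinvariants_tmul (g h : H) :
    mul hπι (toCoinvariants hπι g ⊗ₜ[k] toCoinvariants hπι h)
      = toCoinvariants hπι (coinvProj π ι g * h) := by
  rw [mul_tmul, coe_toCoinvariants, coe_toCoinvariants, toCoinvariants_mul_coinvProj]

theorem comul_toCoinvariants (h : H) : comul hπι (toCoinvariants hπι h)
    = sweedler k h fun x y => toCoinvariants hπι x ⊗ₜ[k] toCoinvariants hπι y := by
  rw [comul_apply]
  exact sweedler_coinvProj hπι h (fun r s => r ⊗ₜ[k] s)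

theorem antipode_toCoinvariants (h : H) :
    antipode hπι (toCoinvariants hπι h) = toCoinvariants hπι (coinvAntipode π ι h) :=
  Subtype.ext <| by
    rw [coe_antipode, coe_toCoinvariants, coe_toCoinvariants, coinvAntipode_coinvProj hπι,
      coinvProj_of_mem_coinvariants (coinvAntipode_mem_coinvariants hπι h)]

theorem tCoact_coact_tmul (r s : coinvariants π) : tCoact (coact hπι) (coact hπι) (r ⊗ₜ[k] s)
    = sweedler k (s : H) fun z w => sweedler k (r : H) fun x y =>
      (π x * π z) ⊗ₜ[k] (toCoinvariants hπι y ⊗ₜ[k] toCoinvariants hπι w) := by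
  simp only [tCoact, LinearMap.comp_apply, coact_apply, TensorProduct.map_tmul, sweedler_tmul,
    tmul_sweedler, map_sweedler, LinearEquiv.coe_coe, TensorProduct.tensorTensorTensorComm_tmul,
    LinearMap.rTensor_tmul, LinearMap.mul'_apply]

theorem mul_comp_rTensor_mul : mul hπι ∘ₗ LinearMap.rTensor (coinvariants π) (mul hπι)
    = mul hπι ∘ₗ LinearMap.lTensor (coinvariants π) (mul hπι)
      ∘ₗ (TensorProduct.assoc k (coinvariants π) (coinvariants π) (coinvariants π)).toLinearMap :=
  TensorProduct.ext_threefold fun r s t => Subtype.ext <| by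
    simp only [LinearMap.comp_apply, LinearMap.rTensor_tmul, LinearMap.lTensor_tmul,
      LinearEquiv.coe_coe, TensorProduct.assoc_tmul, coe_mul_tmul, mul_assoc]

theorem mul_one_tmul (r : coinvariants π) : mul hπι (one π ⊗ₜ[k] r) = r :=
  Subtype.ext <| by rw [coe_mul_tmul, coe_one, one_mul]

theorem mul_tmul_one (r : coinvariants π) : mul hπι (r ⊗ₜ[k] one π) = r :=
  Subtype.ext <| by rw [coe_mul_tmul, coe_one, mul_one]

theorem comul_coassoc :
    (TensorProduct.assoc k (coinvariants π) (coinvariants π) (coinvariants π)).toLinearMap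
        ∘ₗ LinearMap.rTensor (coinvariants π) (comul hπι) ∘ₗ comul hπι
      = LinearMap.lTensor (coinvariants π) (comul hπι) ∘ₗ comul hπι := by
  ext1 r
  simp only [LinearMap.comp_apply, comul_apply _ r, map_sweedler, LinearMap.rTensor_tmul,
    LinearMap.lTensor_tmul, comul_toCoinvariants, sweedler_tmul, tmul_sweedler,
    LinearEquiv.coe_coe, TensorProduct.assoc_tmul]
  exact sweedler_coassoc _ fun x y z => toCoinvariants hπι x ⊗ₜ[k]
    (toCoinvariants hπι y ⊗ₜ[k] toCoinvariants hπι z)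

theorem counit_comul_left : (TensorProduct.lid k (coinvariants π)).toLinearMap
    ∘ₗ LinearMap.rTensor (coinvariants π) (counit π) ∘ₗ comul hπι = LinearMap.id := by
  ext1 r
  simp (disch := fun_prop) only [LinearMap.comp_apply, comul_apply, map_sweedler,
    LinearMap.rTensor_tmul, LinearEquiv.coe_coe, TensorProduct.lid_tmul, counit_apply,
    coe_toCoinvariants, counit_coinvProj, sweedler_counit_smul, toCoinvariants_coe,
    LinearMap.id_apply]

theorem counit_comul_right : (TensorProduct.rid k (coinvariants π)).toLinearMap
    ∘ₗ LinearMap.lTensor (coinvariants π) (counit π) ∘ₗ comul hπι = LinearMap.id := by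
  ext1 r
  simp (disch := fun_prop) only [LinearMap.comp_apply, comul_apply, map_sweedler,
    LinearMap.lTensor_tmul, LinearEquiv.coe_coe, TensorProduct.rid_tmul, counit_apply,
    coe_toCoinvariants, counit_coinvProj, sweedler_smul_counit, toCoinvariants_coe,
    LinearMap.id_apply]

theorem act_tmul_one (a : A) : act hπι (a ⊗ₜ[k] one π) = Coalgebra.counit (R := k) a • one π := by
  rw [act_tmul, coe_one, mul_one, ← one_mul (ι a), toCoinvariants_mul_map, ← coe_one π,
    toCoinvariants_coe]

theorem coact_one : coact hπι (one π) = 1 ⊗ₜ[k] one π := by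
  rw [coact_apply, coe_one, sweedler_of_one _ (by fun_prop) (by fun_prop), map_one, ← coe_one π,
    toCoinvariants_coe]

theorem counit_act (a : A) (r : coinvariants π) :
    counit π (act hπι (a ⊗ₜ[k] r)) = Coalgebra.counit (R := k) a * counit π r := by
  rw [act_tmul, counit_apply, coe_toCoinvariants, counit_coinvProj, Bialgebra.counit_mul,
    CoalgHomClass.counit_comp_apply, counit_apply]

theorem lTensor_counit_coact (r : coinvariants π) :
    TensorProduct.rid k A (LinearMap.lTensor A (counit π) (coact hπι r))
      = counit π r • (1 : A) := by
  simp (disch := fun_prop) only [coact_apply, map_sweedler, LinearMap.lTensor_tmul,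
    TensorProduct.rid_tmul, counit_apply, coe_toCoinvariants, counit_coinvProj,
    sweedler_smul_counit, map_of_mem_coinvariants r.2]

theorem act_comp_lTensor_mul :
    act hπι ∘ₗ LinearMap.lTensor A (mul hπι) = mul hπι ∘ₗ tAct (act hπι) (act hπι) :=
  TensorProduct.ext_threefold' fun a r s => by
    simp only [LinearMap.comp_apply, LinearMap.lTensor_tmul, tAct_tmul_tmul, map_sweedler, act_tmul,
      mul_tmul, coe_toCoinvariants, toCoinvariants_mul_coinvProj]
    simp only [← map_sweedler, ← mul_assoc, ← sweedler_mul, sweedler_coinvProj_map_mul hπι a r.2]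

theorem coact_comp_mul : coact hπι ∘ₗ mul hπι
    = LinearMap.lTensor A (mul hπι) ∘ₗ tCoact (coact hπι) (coact hπι) :=
  TensorProduct.ext' fun r s => by
    simp only [LinearMap.comp_apply, coact_apply _ (mul _ _), coe_mul_tmul, tCoact_coact_tmul,
      map_sweedler, LinearMap.lTensor_tmul, mul_toCoinvariants_tmul]
    rw [sweedler_comm, sweedler_coinvProj_right r.2 (fun x y => sweedler k (s : H) fun z w =>
      (π x * π z) ⊗ₜ[k] toCoinvariants hπι (y * w))]
    simp (disch := fun_prop) only [sweedler_of_mul, map_mul]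

theorem comul_comp_act :
    comul hπι ∘ₗ act hπι = tAct (act hπι) (act hπι) ∘ₗ LinearMap.lTensor A (comul hπι) :=
  TensorProduct.ext' fun a r => by
    simp only [LinearMap.comp_apply, LinearMap.lTensor_tmul, act_tmul, comul_toCoinvariants,
      comul_apply _ r, tmul_sweedler, map_sweedler, tAct_tmul_tmul, coe_toCoinvariants,
      toCoinvariants_mul_coinvProj]
    rw [sweedler_comm]
    simp (disch := fun_prop) only [sweedler_of_mul, sweedler_of_map]

theorem lTensor_comul_comp_coact : LinearMap.lTensor A (comul hπι) ∘ₗ coact hπι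
    = tCoact (coact hπι) (coact hπι) ∘ₗ comul hπι := by
  ext1 r
  simp only [LinearMap.comp_apply, coact_apply, comul_apply _ r, map_sweedler, tCoact_coact_tmul,
    LinearMap.lTensor_tmul, comul_toCoinvariants, tmul_sweedler, coe_toCoinvariants]
  symm
  let p := toCoinvariants hπι
  calc
    _ = sweedler k (r : H) fun x y => sweedler k y fun u v =>
          sweedler k (coinvProj π ι x) fun z w => (π z * π u) ⊗ₜ[k] (p w ⊗ₜ[k] p v) :=
      sweedler_coinvProj_right r.2 fun x y => sweedler k y fun u v =>
        sweedler k (coinvProj π ι x) fun z w => (π z * π u) ⊗ₜ[k] (p w ⊗ₜ[k] p v)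
    _ = sweedler k (r : H) fun x v => sweedler k x fun x u =>
          sweedler k (coinvProj π ι x) fun z w => (π z * π u) ⊗ₜ[k] (p w ⊗ₜ[k] p v) :=
      (sweedler_coassoc _ (fun x u v => sweedler k (coinvProj π ι x) fun z w =>
        (π z * π u) ⊗ₜ[k] (p w ⊗ₜ[k] p v))).symm
    _ = sweedler k (r : H) fun x v => sweedler k x fun z w => π z ⊗ₜ[k] (p w ⊗ₜ[k] p v) := by
      congr! 3 with x v
      exact sweedler_adCoact_coinvProj hπι x fun a s => a ⊗ₜ[k] (s ⊗ₜ[k] p v)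
    _ = _ := sweedler_coassoc _ fun x y z => π x ⊗ₜ[k] (p y ⊗ₜ[k] p z)

theorem comul_comp_mul : comul hπι ∘ₗ mul hπι
    = LinearMap.lTensor (coinvariants π) (mul hπι)
      ∘ₗ (TensorProduct.assoc k (coinvariants π) (coinvariants π) (coinvariants π)).toLinearMap
      ∘ₗ LinearMap.rTensor (coinvariants π) (LinearMap.rTensor (coinvariants π) (mul hπι))
      ∘ₗ LinearMap.rTensor (coinvariants π) (TensorProduct.assoc k (coinvariants π)
          (coinvariants π) (coinvariants π)).symm.toLinearMap
      ∘ₗ LinearMap.rTensor (coinvariants π)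
          (LinearMap.lTensor (coinvariants π) (ydBraid (coact hπι) (act hπι)))
      ∘ₗ LinearMap.rTensor (coinvariants π)
          (TensorProduct.assoc k (coinvariants π) (coinvariants π) (coinvariants π)).toLinearMap
      ∘ₗ (TensorProduct.assoc k (coinvariants π ⊗[k] coinvariants π) (coinvariants π)
          (coinvariants π)).symm.toLinearMap
      ∘ₗ TensorProduct.map (comul hπι) (comul hπι) :=
  TensorProduct.ext' fun r s => by
    simp only [LinearMap.comp_apply, mul_tmul _ r s, comul_toCoinvariants, TensorProduct.map_tmul,
      comul_apply _ r, comul_apply _ s, ydBraid, coact_apply, sweedler_tmul, tmul_sweedler,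
      map_sweedler, LinearEquiv.coe_coe, TensorProduct.assoc_tmul, TensorProduct.assoc_symm_tmul,
      TensorProduct.comm_tmul, LinearMap.rTensor_tmul, LinearMap.lTensor_tmul, act_tmul,
      mul_toCoinvariants_tmul, coe_toCoinvariants, toCoinvariants_mul_coinvProj, ← mul_assoc]
    simp (disch := fun_prop) only [sweedler_of_mul]
    rw [sweedler_comm]
    congr! 3 with z w
    exact (sweedler_coinvComul_adCoact r.2 (fun x y => toCoinvariants hπι (x * z) ⊗ₜ[k]
      toCoinvariants hπι (y * w))).symm

theorem counit_mul (r s : coinvariants π) :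
    counit π (mul hπι (r ⊗ₜ[k] s)) = counit π r * counit π s := by
  rw [counit_apply, coe_mul_tmul, Bialgebra.counit_mul, counit_apply, counit_apply]

theorem counit_one (π : H →ₐc[k] A) : counit π (one π) = 1 :=
  Bialgebra.counit_one

theorem comul_one : comul hπι (one π) = one π ⊗ₜ[k] one π := by
  rw [comul_apply, coe_one, sweedler_of_one _ (by fun_prop) (by fun_prop), ← coe_one π,
    toCoinvariants_coe]

theorem mul_rTensor_antipode_comul (r : coinvariants π) :
    mul hπι (LinearMap.rTensor (coinvariants π) (antipode hπι) (comul hπι r))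
      = counit π r • one π := by
  simp only [comul_apply, map_sweedler, LinearMap.rTensor_tmul, antipode_toCoinvariants,
    mul_toCoinvariants_tmul]
  simp only [coinvProj_of_mem_coinvariants (coinvAntipode_mem_coinvariants hπι _), ← map_sweedler,
    sweedler_coinvAntipode_mul, map_of_mem_coinvariants r.2, map_smul, map_one, ← coe_one π,
    toCoinvariants_coe, counit_apply]

theorem mul_lTensor_antipode_comul (r : coinvariants π) :
    mul hπι (LinearMap.lTensor (coinvariants π) (antipode hπι) (comul hπι r))
      = counit π r • one π := by
  simp only [comul_apply, map_sweedler, LinearMap.lTensor_tmul, antipode_toCoinvariants,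
    mul_toCoinvariants_tmul]
  simp only [coinvAntipode_apply, ← map_sweedler, mul_sweedler, ← mul_assoc]
  rw [← sweedler_coassoc _ (fun x y z => coinvProj π ι x * ι (π y) * HopfAlgebra.antipode k z)]
  simp only [← sweedler_mul, sweedler_coinvProj_mul, sweedler_mul_antipode, map_smul, ← coe_one π,
    toCoinvariants_coe, counit_apply]

end coinvariants

/-- The multiplication map `r ⊗ a ↦ rι(a)` from the Radford biproduct to `H`. -/
def ofBiproduct (π : H →ₐc[k] A) (ι : A →ₐc[k] H) : coinvariants π ⊗[k] A →ₗ[k] H :=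
  LinearMap.mul' k H ∘ₗ TensorProduct.map (coinvariants π).subtype ι.toLinearMap

theorem ofBiproduct_tmul (r : coinvariants π) (a : A) : ofBiproduct π ι (r ⊗ₜ[k] a) = r * ι a :=
  rfl

theorem ofBiproduct_one (π : H →ₐc[k] A) (ι : A →ₐc[k] H) :
    ofBiproduct π ι (coinvariants.one π ⊗ₜ[k] 1) = 1 := by
  rw [ofBiproduct_tmul, coinvariants.coe_one, map_one, one_mul]

theorem bijective_ofBiproduct (hπι : ∀ a, π (ι a) = a) :
    Function.Bijective (ofBiproduct π ι) := by
  let inv : H →ₗ[k] coinvariants π ⊗[k] A :=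
    TensorProduct.map (toCoinvariants hπι) π.toLinearMap ∘ₗ comul
  have inv_apply (h : H) : inv h = sweedler k h fun x y => toCoinvariants hπι x ⊗ₜ[k] π y := by
    simp only [inv, LinearMap.comp_apply, comul_eq_sweedler, map_sweedler, TensorProduct.map_tmul]
    rfl
  have left_inv : inv ∘ₗ ofBiproduct π ι = LinearMap.id := TensorProduct.ext' fun r a => by
    rw [LinearMap.comp_apply, ofBiproduct_tmul, inv_apply]
    simp (disch := fun_prop) only [sweedler_of_mul, sweedler_of_map, map_mul, hπι,
      toCoinvariants_mul_map, ← TensorProduct.smul_tmul', sweedler_counit_smul]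
    rw [sweedler_of_mem_coinvariants r.2 (fun x b => toCoinvariants hπι x ⊗ₜ[k] (b * a)), one_mul,
      toCoinvariants_coe, LinearMap.id_apply]
  have right_inv (h : H) : ofBiproduct π ι (inv h) = h := by
    simp only [inv_apply, map_sweedler, ofBiproduct_tmul, coe_toCoinvariants,
      sweedler_coinvProj_mul]
  exact Function.bijective_iff_has_inverse.2 ⟨inv, LinearMap.congr_fun left_inv, right_inv⟩

theorem ofBiproduct_comp_biMulG (hπι : ∀ a, π (ι a) = a) :
    ofBiproduct π ι ∘ₗ biMulG (coinvariants.mul hπι) (coinvariants.act hπι)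
      = LinearMap.mul' k H ∘ₗ TensorProduct.map (ofBiproduct π ι) (ofBiproduct π ι) :=
  TensorProduct.ext_fourfold' fun r a s b => by
    simp only [LinearMap.comp_apply, biMulG, LinearMap.rTensor_tmul, LinearMap.lTensor_tmul,
      comul_eq_sweedler, tmul_sweedler, sweedler_tmul, map_sweedler, LinearEquiv.coe_coe,
      TensorProduct.assoc_symm_tmul, TensorProduct.tensorTensorTensorComm_tmul,
      TensorProduct.map_tmul, TensorProduct.assoc_tmul, LinearMap.mul'_apply, ofBiproduct_tmul,
      coinvariants.coe_mul_tmul, coinvariants.act_tmul, coe_toCoinvariants, map_mul, ← mul_assoc]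
    simp only [← sweedler_mul, mul_assoc _ (coinvProj π ι _), ← mul_sweedler,
      sweedler_coinvProj_map_mul hπι a s.2]
    simp only [mul_assoc]

theorem comul_comp_ofBiproduct (hπι : ∀ a, π (ι a) = a) : comul ∘ₗ ofBiproduct π ι
    = TensorProduct.map (ofBiproduct π ι) (ofBiproduct π ι)
      ∘ₗ biComulG (coinvariants.comul hπι) (coinvariants.coact hπι) :=
  TensorProduct.ext' fun r a => by
    simp only [LinearMap.comp_apply, biComulG, LinearMap.rTensor_tmul, LinearMap.lTensor_tmul,
      comul_eq_sweedler, coinvariants.comul_apply, coinvariants.coact_apply, tmul_sweedler,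
      sweedler_tmul, map_sweedler, LinearEquiv.coe_coe, TensorProduct.assoc_symm_tmul,
      TensorProduct.tensorTensorTensorComm_tmul, TensorProduct.map_tmul, TensorProduct.assoc_tmul,
      LinearMap.mul'_apply, ofBiproduct_tmul, coe_toCoinvariants, map_mul, ← mul_assoc]
    simp (disch := fun_prop) only [sweedler_of_mul, sweedler_of_map]
    rw [sweedler_comm]
    congr! 3 with b c
    exact (sweedler_coinvComul_adCoact r.2 (fun x y => (x * ι b) ⊗ₜ[k] (y * ι c))).symm

theorem counit_comp_ofBiproduct (π : H →ₐc[k] A) (ι : A →ₐc[k] H) :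
    counit ∘ₗ ofBiproduct π ι = biCounitG (coinvariants.counit π) :=
  TensorProduct.ext' fun r a => by
    rw [LinearMap.comp_apply, ofBiproduct_tmul, Bialgebra.counit_mul,
      CoalgHomClass.counit_comp_apply]
    rfl

end Projection

/-- **Radford projection theorem.** Let `π : H → A` and `ι : A → H`
be Hopf algebra maps with `π ∘ ι = id`, and let `K` be the coinvariants of `π`.
Then (1) `K` is a unital subalgebra of `H`; (2) the adjoint action and the coaction
`r ↦ π(r₍₁₎) ⊗ r₍₂₎` make `K` a Yetter–Drinfel'd module over `A`; (3) together
with `Δ_K`, `ε_K = ε_H|_K` and `S_K`, `K` is a Hopf algebra in the category of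
`A`-Yetter–Drinfel'd modules; and (4) `r ⊗ a ↦ r ι(a)` is an isomorphism of Hopf
algebras from the Radford biproduct `K ⋊ A` to `H`. -/
theorem radford_projection (π : H →ₐc[k] A) (ι : A →ₐc[k] H)
    (hπι : ∀ a : A, π (ι a) = a) :
    -- (1) the coinvariants form a unital subalgebra
    ((1 : H) ∈ coinvariants π
      ∧ ∀ r s : H, r ∈ coinvariants π → s ∈ coinvariants π → r * s ∈ coinvariants π)
    -- (2) the adjoint action and the coaction restrict to the coinvariants
    ∧ (∀ (a : A) (r : H), r ∈ coinvariants π → adAct ι (a ⊗ₜ[k] r) ∈ coinvariants π)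
    ∧ (∀ r ∈ coinvariants π, adCoact π r
        ∈ LinearMap.range (LinearMap.lTensor A (coinvariants π).subtype))
    -- (3) `Δ_K` and `S_K` restrict to the coinvariants
    ∧ (∀ r ∈ coinvariants π, coinvComul π ι r
        ∈ LinearMap.range
            (TensorProduct.map (coinvariants π).subtype (coinvariants π).subtype))
    ∧ (∀ r ∈ coinvariants π, coinvAntipode π ι r ∈ coinvariants π)
    -- the restricted structure maps make `K` a braided Hopf algebra in the category
    -- of Yetter–Drinfel'd modules over `A`, and `K ⋊ A ≅ H`:
    ∧ ∃ (actK : A ⊗[k] ↥(coinvariants π) →ₗ[k] ↥(coinvariants π))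
        (coactK : ↥(coinvariants π) →ₗ[k] A ⊗[k] ↥(coinvariants π))
        (mulK : ↥(coinvariants π) ⊗[k] ↥(coinvariants π) →ₗ[k] ↥(coinvariants π))
        (oneK : ↥(coinvariants π))
        (comulK : ↥(coinvariants π) →ₗ[k] ↥(coinvariants π) ⊗[k] ↥(coinvariants π))
        (counitK : ↥(coinvariants π) →ₗ[k] k)
        (sK : ↥(coinvariants π) →ₗ[k] ↥(coinvariants π)),
      -- the structure maps agree with the ambient formulas on `H`
      ((coinvariants π).subtype ∘ₗ actK
          = adAct ι ∘ₗ LinearMap.lTensor A (coinvariants π).subtype)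
      ∧ (LinearMap.lTensor A (coinvariants π).subtype ∘ₗ coactK
          = adCoact π ∘ₗ (coinvariants π).subtype)
      ∧ ((coinvariants π).subtype ∘ₗ mulK
          = LinearMap.mul' k H
            ∘ₗ TensorProduct.map (coinvariants π).subtype (coinvariants π).subtype)
      ∧ ((oneK : H) = 1)
      ∧ (TensorProduct.map (coinvariants π).subtype (coinvariants π).subtype ∘ₗ comulK
          = coinvComul π ι ∘ₗ (coinvariants π).subtype)
      ∧ (counitK = Coalgebra.counit (R := k) ∘ₗ (coinvariants π).subtype)
      ∧ ((coinvariants π).subtype ∘ₗ sK = coinvAntipode π ι ∘ₗ (coinvariants π).subtype)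
      -- (2') `K` is a Yetter–Drinfel'd module over `A`
      ∧ IsYD actK coactK
      -- (3') `K` is an algebra and a coalgebra ...
      ∧ (mulK ∘ₗ LinearMap.rTensor ↥(coinvariants π) mulK
          = mulK ∘ₗ LinearMap.lTensor ↥(coinvariants π) mulK
            ∘ₗ (TensorProduct.assoc k ↥(coinvariants π) ↥(coinvariants π)
                ↥(coinvariants π)).toLinearMap)
      ∧ (∀ r : ↥(coinvariants π), mulK (oneK ⊗ₜ[k] r) = r ∧ mulK (r ⊗ₜ[k] oneK) = r)
      ∧ ((TensorProduct.assoc k ↥(coinvariants π) ↥(coinvariants π)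
            ↥(coinvariants π)).toLinearMap
          ∘ₗ LinearMap.rTensor ↥(coinvariants π) comulK ∘ₗ comulK
        = LinearMap.lTensor ↥(coinvariants π) comulK ∘ₗ comulK)
      ∧ ((TensorProduct.lid k ↥(coinvariants π)).toLinearMap
          ∘ₗ LinearMap.rTensor ↥(coinvariants π) counitK ∘ₗ comulK = LinearMap.id)
      ∧ ((TensorProduct.rid k ↥(coinvariants π)).toLinearMap
          ∘ₗ LinearMap.lTensor ↥(coinvariants π) counitK ∘ₗ comulK = LinearMap.id)
      -- ... whose structure maps are `A`-linear and `A`-colinear ...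
      ∧ (∀ a : A, actK (a ⊗ₜ[k] oneK) = Coalgebra.counit (R := k) a • oneK)
      ∧ (coactK oneK = (1 : A) ⊗ₜ[k] oneK)
      ∧ (∀ (a : A) (r : ↥(coinvariants π)),
          counitK (actK (a ⊗ₜ[k] r)) = Coalgebra.counit (R := k) a * counitK r)
      ∧ (∀ r : ↥(coinvariants π),
          (TensorProduct.rid k A) (LinearMap.lTensor A counitK (coactK r))
            = counitK r • (1 : A))
      ∧ (actK ∘ₗ LinearMap.lTensor A mulK = mulK ∘ₗ tAct actK actK)
      ∧ (coactK ∘ₗ mulK = LinearMap.lTensor A mulK ∘ₗ tCoact coactK coactK)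
      ∧ (comulK ∘ₗ actK = tAct actK actK ∘ₗ LinearMap.lTensor A comulK)
      ∧ (LinearMap.lTensor A comulK ∘ₗ coactK = tCoact coactK coactK ∘ₗ comulK)
      -- ... satisfying the braided bialgebra axiom ...
      ∧ (comulK ∘ₗ mulK
          = LinearMap.lTensor ↥(coinvariants π) mulK
            ∘ₗ (TensorProduct.assoc k ↥(coinvariants π) ↥(coinvariants π)
                ↥(coinvariants π)).toLinearMap
            ∘ₗ LinearMap.rTensor ↥(coinvariants π)
                (LinearMap.rTensor ↥(coinvariants π) mulK)
            ∘ₗ LinearMap.rTensor ↥(coinvariants π)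
                (TensorProduct.assoc k ↥(coinvariants π) ↥(coinvariants π)
                  ↥(coinvariants π)).symm.toLinearMap
            ∘ₗ LinearMap.rTensor ↥(coinvariants π)
                (LinearMap.lTensor ↥(coinvariants π) (ydBraid coactK actK))
            ∘ₗ LinearMap.rTensor ↥(coinvariants π)
                (TensorProduct.assoc k ↥(coinvariants π) ↥(coinvariants π)
                  ↥(coinvariants π)).toLinearMap
            ∘ₗ (TensorProduct.assoc k
                (↥(coinvariants π) ⊗[k] ↥(coinvariants π)) ↥(coinvariants π)
                ↥(coinvariants π)).symm.toLinearMap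
            ∘ₗ TensorProduct.map comulK comulK)
      ∧ (∀ r s : ↥(coinvariants π), counitK (mulK (r ⊗ₜ[k] s)) = counitK r * counitK s)
      ∧ (counitK oneK = 1)
      ∧ (comulK oneK = oneK ⊗ₜ[k] oneK)
      -- ... and with `S_K` a convolution inverse of the identity
      ∧ (∀ r : ↥(coinvariants π),
          mulK (LinearMap.rTensor ↥(coinvariants π) sK (comulK r)) = counitK r • oneK)
      ∧ (∀ r : ↥(coinvariants π),
          mulK (LinearMap.lTensor ↥(coinvariants π) sK (comulK r)) = counitK r • oneK)
      -- (4) `r ⊗ a ↦ r ι(a)` is an isomorphism of Hopf algebras `K ⋊ A ≅ H`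
      ∧ (Function.Bijective
          (LinearMap.mul' k H
            ∘ₗ TensorProduct.map (coinvariants π).subtype ι.toLinearMap))
      ∧ ((LinearMap.mul' k H
            ∘ₗ TensorProduct.map (coinvariants π).subtype ι.toLinearMap)
          ∘ₗ biMulG mulK actK
        = LinearMap.mul' k H
          ∘ₗ TensorProduct.map
              (LinearMap.mul' k H
                ∘ₗ TensorProduct.map (coinvariants π).subtype ι.toLinearMap)
              (LinearMap.mul' k H
                ∘ₗ TensorProduct.map (coinvariants π).subtype ι.toLinearMap))
      ∧ ((LinearMap.mul' k H
            ∘ₗ TensorProduct.map (coinvariants π).subtype ι.toLinearMap)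
          (oneK ⊗ₜ[k] (1 : A)) = 1)
      ∧ ((Coalgebra.comul (R := k))
          ∘ₗ (LinearMap.mul' k H
            ∘ₗ TensorProduct.map (coinvariants π).subtype ι.toLinearMap)
        = TensorProduct.map
            (LinearMap.mul' k H
              ∘ₗ TensorProduct.map (coinvariants π).subtype ι.toLinearMap)
            (LinearMap.mul' k H
              ∘ₗ TensorProduct.map (coinvariants π).subtype ι.toLinearMap)
          ∘ₗ biComulG comulK coactK)
      ∧ ((Coalgebra.counit (R := k))
          ∘ₗ (LinearMap.mul' k H
            ∘ₗ TensorProduct.map (coinvariants π).subtype ι.toLinearMap)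
        = biCounitG counitK) := by
  open coinvariants in
  refine ⟨⟨one_mem_coinvariants π, fun _ _ => mul_mem_coinvariants⟩,
    fun a r hr => adAct_mem_coinvariants hπι a hr,
    fun r hr => ⟨_, LinearMap.congr_fun (lTensor_subtype_comp_coact hπι) ⟨r, hr⟩⟩,
    fun r hr => ⟨_, LinearMap.congr_fun (map_subtype_comp_comul hπι) ⟨r, hr⟩⟩,
    fun r _ => coinvAntipode_mem_coinvariants hπι r,
    act hπι, coact hπι, mul hπι, one π, comul hπι, counit π, antipode hπι,
    subtype_comp_act hπι, lTensor_subtype_comp_coact hπι, subtype_comp_mul hπι, rfl,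
    map_subtype_comp_comul hπι, rfl, rfl, isYD hπι, ?_⟩
  open coinvariants in
  exact ⟨mul_comp_rTensor_mul hπι, fun r => ⟨mul_one_tmul hπι r, mul_tmul_one hπι r⟩,
    comul_coassoc hπι, counit_comul_left hπι, counit_comul_right hπι,
    act_tmul_one hπι, coact_one hπι, counit_act hπι, lTensor_counit_coact hπι,
    act_comp_lTensor_mul hπι, coact_comp_mul hπι, comul_comp_act hπι,
    lTensor_comul_comp_coact hπι, comul_comp_mul hπι, counit_mul hπι, counit_one π, comul_one hπι,
    mul_rTensor_antipode_comul hπι, mul_lTensor_antipode_comul hπι, bijective_ofBiproduct hπι,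
    ofBiproduct_comp_biMulG hπι, ofBiproduct_one π ι, comul_comp_ofBiproduct hπι,
    counit_comp_ofBiproduct π ι⟩

end Radford

end
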